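/- arXiv:1603.09448 — 2 statements merged into one kernel-verified Lean document; each statement's English description precedes it below -/
import Mathlib

section
/- (Parity cancellation / Cut part of Cut&Count) Let R be a finite family of subsets of V(G), each containing a fixed vertex v₁, and let C = {(F, (F¹,F²)) : F ∈ R, (F¹,F²) is a consistent cut of F with v₁ ∈ F¹}. Then |C| ≡ |{F ∈ R : G[F] is connected}| (mod 2). -/
/-! A consistent cut of `F` never separates a connected component of `G[F]`, so it is determined by
which components lie on its second side, and every choice is possible. When `v ∈ F` must lie on the
first side, the component of `v` is excluded from this choice, which leaves `2 ^ (c - 1)` cuts,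
where `c` is the number of components of `G[F]`. This is odd exactly when `c = 1`, that is, when
`G[F]` is connected. -/

theorem modEq_two_of_odd_iff_odd {m n : ℕ} (h : Odd m ↔ Odd n) : m ≡ n [MOD 2] := by
  rw [Nat.odd_iff, Nat.odd_iff] at h
  rw [Nat.ModEq]
  lia

theorem odd_two_pow_pred_iff {n : ℕ} (hn : n ≠ 0) : Odd (2 ^ (n - 1)) ↔ n = 1 := by
  simp only [← Nat.not_even_iff_odd, Nat.even_pow, even_two, true_and]
  lia

theorem ncard_setOf_fst_mem_and_snd_mem {α β : Type*} (s : Finset α) {t : α → Set β}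
    (ht : ∀ a ∈ s, (t a).Finite) :
    {x : α × β | x.1 ∈ s ∧ x.2 ∈ t x.1}.ncard = ∑ a ∈ s, (t a).ncard := by
  have hunion : {x : α × β | x.1 ∈ s ∧ x.2 ∈ t x.1} = ⋃ a ∈ (s : Set α), Prod.mk a '' t a := by
    ext ⟨a, b⟩
    simp [and_comm]
  have hdisj : (s : Set α).PairwiseDisjoint fun a ↦ Prod.mk a '' t a := by
    intro a _ b _ hab
    rw [Function.onFun, Set.disjoint_left]
    rintro _ ⟨x, _, rfl⟩ ⟨y, _, hxy⟩
    exact hab (congrArg Prod.fst hxy).symm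
  rw [hunion, s.finite_toSet.ncard_biUnion (fun a ha ↦ (ht a ha).image _) hdisj,
    finsum_mem_coe_finset]
  exact Finset.sum_congr rfl fun a _ ↦ Set.ncard_image_of_injective _ (Prod.mk_right_injective a)

section Components

variable {W : Type*} {H : SimpleGraph W}

theorem connected_iff_natCard_connectedComponent_eq_one :
    H.Connected ↔ Nat.card H.ConnectedComponent = 1 := by
  rw [Nat.card_eq_one_iff_unique]
  constructor
  · intro h
    exact ⟨h.preconnected.subsingleton_connectedComponent, h.nonempty.map H.connectedComponentMk⟩
  · rintro ⟨_, ⟨c⟩⟩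
    obtain ⟨v, rfl⟩ := c.exists_rep
    exact H.connected_iff_exists_forall_reachable.2
      ⟨v, fun w ↦ SimpleGraph.ConnectedComponent.exact (Subsingleton.elim _ _)⟩

theorem mem_of_reachable_of_forall_not_adj {S : Set W} (hS : ∀ u ∈ S, ∀ w ∉ S, ¬ H.Adj u w)
    {u w : W} (hu : u ∈ S) (huw : H.Reachable u w) : w ∈ S := by
  by_contra hw
  obtain ⟨q⟩ := huw
  obtain ⟨d, -, hfst, hsnd⟩ := q.exists_boundary_dart S hu hw
  exact hS _ hfst _ hsnd d.adj

theorem preimage_image_connectedComponentMk {S : Set W} (hS : ∀ u ∈ S, ∀ w ∉ S, ¬ H.Adj u w) :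
    H.connectedComponentMk ⁻¹' (H.connectedComponentMk '' S) = S := by
  refine Set.Subset.antisymm ?_ (Set.subset_preimage_image _ S)
  rintro w ⟨u, hu, huw⟩
  exact mem_of_reachable_of_forall_not_adj hS hu (SimpleGraph.ConnectedComponent.exact huw)

end Components

section Cuts

variable {V : Type*} {G : SimpleGraph V} {F : Set V}

/-- The pair `p` is a consistent cut of `F`: its two sides partition `F` (either may be empty) and
no edge of `G` joins them. -/
def IsConsistentCut (G : SimpleGraph V) (F : Set V) (p : Set V × Set V) : Prop :=
  p.1 ∩ p.2 = ∅ ∧ p.1 ∪ p.2 = F ∧ ∀ u ∈ p.1, ∀ w ∈ p.2, ¬ G.Adj u w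

/-- The consistent cuts of `F` having the root `v` on the first side. -/
def rootedConsistentCuts (G : SimpleGraph V) (F : Set V) (v : V) : Set (Set V × Set V) :=
  {p | IsConsistentCut G F p ∧ v ∈ p.1}

/-- The union of a set `T` of components of `G[F]`, as a set of vertices of `G`. -/
def componentUnion (T : Set (G.induce F).ConnectedComponent) : Set V :=
  Subtype.val '' ((G.induce F).connectedComponentMk ⁻¹' T)

/-- The cut of `F` whose second side consists of the components `T` of `G[F]`. -/
def cutOfComponents (T : Set (G.induce F).ConnectedComponent) : Set V × Set V :=
  (F \ componentUnion T, componentUnion T)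

theorem mem_componentUnion_iff {T : Set (G.induce F).ConnectedComponent} {u : V} (hu : u ∈ F) :
    u ∈ componentUnion T ↔ (G.induce F).connectedComponentMk ⟨u, hu⟩ ∈ T := by
  simp [componentUnion, hu]

theorem componentUnion_subset (T : Set (G.induce F).ConnectedComponent) : componentUnion T ⊆ F :=
  Subtype.coe_image_subset F _

theorem componentUnion_injective :
    Function.Injective (componentUnion : Set (G.induce F).ConnectedComponent → Set V) :=
  Subtype.val_injective.image_injective.comp
    (Set.preimage_injective.2 Quot.mk_surjective)

theorem cutOfComponents_injective :
    Function.Injective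
      (cutOfComponents : Set (G.induce F).ConnectedComponent → Set V × Set V) :=
  fun _ _ h ↦ componentUnion_injective (congrArg Prod.snd h)

theorem isConsistentCut_cutOfComponents (T : Set (G.induce F).ConnectedComponent) :
    IsConsistentCut G F (cutOfComponents T) := by
  refine ⟨Set.sdiff_inter_self, Set.sdiff_union_of_subset (componentUnion_subset T), ?_⟩
  rintro u ⟨huF, huT⟩ w hwT huw
  have hwF : w ∈ F := componentUnion_subset T hwT
  have hadj : (G.induce F).Adj ⟨u, huF⟩ ⟨w, hwF⟩ := huw
  rw [mem_componentUnion_iff huF,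
    SimpleGraph.ConnectedComponent.connectedComponentMk_eq_of_adj hadj] at huT
  exact huT ((mem_componentUnion_iff hwF).1 hwT)

theorem IsConsistentCut.exists_cutOfComponents_eq {p : Set V × Set V}
    (hp : IsConsistentCut G F p) :
    ∃ T : Set (G.induce F).ConnectedComponent, cutOfComponents T = p := by
  obtain ⟨A, B⟩ := p
  obtain ⟨hdisj, hunion, hcross⟩ := hp
  have hBF : B ⊆ F := hunion ▸ Set.subset_union_right
  have hclosed : ∀ u ∈ (Subtype.val ⁻¹' B : Set F), ∀ w ∉ (Subtype.val ⁻¹' B : Set F),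
      ¬ (G.induce F).Adj u w := by
    intro u hu w hw huw
    have hwA : w.1 ∈ A := (hunion.symm.subset w.2).resolve_right hw
    exact hcross w hwA u hu huw.symm
  refine ⟨(G.induce F).connectedComponentMk '' (Subtype.val ⁻¹' B), ?_⟩
  have hB : componentUnion ((G.induce F).connectedComponentMk '' (Subtype.val ⁻¹' B)) = B := by
    rw [componentUnion, preimage_image_connectedComponentMk hclosed,
      Subtype.image_preimage_coe, Set.inter_eq_right.2 hBF]
  have hA : F \ B = A := by
    rw [← hunion, Set.union_sdiff_right, (Set.disjoint_iff_inter_eq_empty.2 hdisj).sdiff_eq_left]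
  rw [cutOfComponents, hB, hA]

theorem rootedConsistentCuts_eq_image {v : V} (hv : v ∈ F) :
    rootedConsistentCuts G F v =
      cutOfComponents '' 𝒫 {(G.induce F).connectedComponentMk ⟨v, hv⟩}ᶜ := by
  have hroot (T : Set (G.induce F).ConnectedComponent) :
      v ∈ (cutOfComponents T).1 ↔ T ∈ 𝒫 {(G.induce F).connectedComponentMk ⟨v, hv⟩}ᶜ := by
    simp [cutOfComponents, hv, mem_componentUnion_iff hv]
  ext p
  constructor
  · rintro ⟨hp, hvp⟩
    obtain ⟨T, rfl⟩ := hp.exists_cutOfComponents_eq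
    exact ⟨T, (hroot T).1 hvp, rfl⟩
  · rintro ⟨T, hT, rfl⟩
    exact ⟨isConsistentCut_cutOfComponents T, (hroot T).2 hT⟩

variable [Finite (G.induce F).ConnectedComponent] {v : V}

theorem finite_rootedConsistentCuts (hv : v ∈ F) : (rootedConsistentCuts G F v).Finite := by
  rw [rootedConsistentCuts_eq_image hv]
  exact (Set.toFinite _).image _

theorem ncard_rootedConsistentCuts (hv : v ∈ F) :
    (rootedConsistentCuts G F v).ncard = 2 ^ (Nat.card (G.induce F).ConnectedComponent - 1) := by
  rw [rootedConsistentCuts_eq_image hv, Set.ncard_image_of_injective _ cutOfComponents_injective,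
    Set.ncard_powerset, Set.ncard_compl, Set.ncard_singleton]

theorem odd_ncard_rootedConsistentCuts_iff (hv : v ∈ F) :
    Odd (rootedConsistentCuts G F v).ncard ↔ (G.induce F).Connected := by
  have : Nonempty F := ⟨⟨v, hv⟩⟩
  rw [ncard_rootedConsistentCuts hv, odd_two_pow_pred_iff Nat.card_pos.ne',
    connected_iff_natCard_connectedComponent_eq_one]

end Cuts

theorem stmt7_general {V : Type*} (G : SimpleGraph V) (v₁ : V)
    (R : Finset (Set V)) (hR : ∀ F ∈ R, v₁ ∈ F)
    (hfin : ∀ F ∈ R, Finite (G.induce F).ConnectedComponent) :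
    Set.ncard {x : Set V × (Set V × Set V) | x.1 ∈ R ∧
      x.2.1 ∩ x.2.2 = ∅ ∧ x.2.1 ∪ x.2.2 = x.1 ∧
      (∀ u ∈ x.2.1, ∀ v ∈ x.2.2, ¬ G.Adj u v) ∧ v₁ ∈ x.2.1} ≡
    Set.ncard {F : Set V | F ∈ R ∧ (G.induce F).Connected} [MOD 2] := by
  classical
  suffices {x : Set V × (Set V × Set V) | x.1 ∈ R ∧ x.2 ∈ rootedConsistentCuts G x.1 v₁}.ncard ≡
      {F : Set V | F ∈ R ∧ (G.induce F).Connected}.ncard [MOD 2] by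
    simpa only [rootedConsistentCuts, IsConsistentCut, Set.mem_ofPred_eq, and_assoc] using this
  have hodd : {F ∈ R | Odd (rootedConsistentCuts G F v₁).ncard} =
      {F ∈ R | (G.induce F).Connected} :=
    Finset.filter_congr fun F hF ↦
      have := hfin F hF; odd_ncard_rootedConsistentCuts_iff (hR F hF)
  have hconn : {F : Set V | F ∈ R ∧ (G.induce F).Connected}.ncard =
      Finset.card {F ∈ R | (G.induce F).Connected} := by
    rw [← Set.ncard_coe_finset, Finset.coe_filter]
  rw [ncard_setOf_fst_mem_and_snd_mem R fun F hF ↦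
    have := hfin F hF; finite_rootedConsistentCuts (hR F hF), hconn, ← hodd]
  exact modEq_two_of_odd_iff_odd (Finset.odd_sum_iff_odd_card_odd _)

/-- Cut part of Cut&Count: the number of pairs (candidate solution, consistent cut with
`v₁` on the first side) is congruent mod 2 to the number of candidate solutions `F`
with `G[F]` connected. -/
theorem stmt7 {V : Type*} [Fintype V] (G : SimpleGraph V) (v₁ : V)
    (R : Finset (Set V)) (hR : ∀ F ∈ R, v₁ ∈ F) :
    Set.ncard {x : Set V × (Set V × Set V) | x.1 ∈ R ∧
      x.2.1 ∩ x.2.2 = ∅ ∧ x.2.1 ∪ x.2.2 = x.1 ∧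
      (∀ u ∈ x.2.1, ∀ v ∈ x.2.2, ¬ G.Adj u v) ∧ v₁ ∈ x.2.1} ≡
    Set.ncard {F : Set V | F ∈ R ∧ (G.induce F).Connected} [MOD 2] :=
  stmt7_general G v₁ R hR fun _ _ ↦ inferInstance
end

section
/- (Isolation Lemma) Let F ⊆ 2^U be a nonempty family of subsets of a finite universe U. If for each u ∈ U a weight w(u) ∈ {1, 2, ..., N} is chosen uniformly and independently at random, then the probability that there is a unique S ∈ F minimizing w(S) = Σ_{u∈S} w(u) is at least 1 − |U|/N. -/
/-!
Suppose two weightings agree off `u`, that `S ∋ u` is a minimizer for the first and `T ∌ u` a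
minimizer for the second. Then `w(S) ≤ w(T) = w'(T) ≤ w'(S)`, and cancelling the common part of `S`
gives `w(u) ≤ w'(u)`. Hence, once the weights off `u` are fixed, at most one value of the weight of
`u` makes the minimizers disagree about `u`, and this has probability at most `1 / |α u|`, where
`α u` is the range of the weight of `u`. If the minimizer is not unique, the minimizers disagree
about some `u`, and a union bound over `u` concludes.
-/

open Finset Function

section Minimizers

variable {U M : Type*} [AddCommMonoid M] {𝓕 : Finset (Finset U)} {w w' : U → M} {u : U}

/-- `S` is a member of `𝓕` of minimum total weight. -/
def IsMinimizer [LE M] (𝓕 : Finset (Finset U)) (w : U → M) (S : Finset U) : Prop :=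
  S ∈ 𝓕 ∧ ∀ T ∈ 𝓕, ∑ u ∈ S, w u ≤ ∑ u ∈ T, w u

/-- The weighting `w` isolates `𝓕`: the minimum weight over `𝓕` is attained by a unique member. -/
def Isolates [LE M] (w : U → M) (𝓕 : Finset (Finset U)) : Prop :=
  ∃! S, IsMinimizer 𝓕 w S

/-- The minimizers of `w` over `𝓕` disagree about `u`: some contain it and some avoid it. These are
the events of the union bound. -/
def AmbiguousAt [LE M] (𝓕 : Finset (Finset U)) (w : U → M) (u : U) : Prop :=
  (∃ S, IsMinimizer 𝓕 w S ∧ u ∈ S) ∧ ∃ T, IsMinimizer 𝓕 w T ∧ u ∉ T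

theorem IsMinimizer.apply_le_of_mem_of_notMem [PartialOrder M] [IsOrderedCancelAddMonoid M]
    {S T : Finset U} (hS : IsMinimizer 𝓕 w S) (hT : IsMinimizer 𝓕 w' T)
    (hw : ∀ v ≠ u, w v = w' v) (huS : u ∈ S) (huT : u ∉ T) : w u ≤ w' u := by
  classical
  have sum_eq {R : Finset U} (huR : u ∉ R) : ∑ v ∈ R, w v = ∑ v ∈ R, w' v :=
    sum_congr rfl fun v hv => hw v (ne_of_mem_of_not_mem hv huR)
  have h : w u + ∑ v ∈ S.erase u, w v ≤ w' u + ∑ v ∈ S.erase u, w v :=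
    calc w u + ∑ v ∈ S.erase u, w v
        = ∑ v ∈ S, w v := add_sum_erase S w huS
      _ ≤ ∑ v ∈ T, w v := hS.2 T hT.1
      _ = ∑ v ∈ T, w' v := sum_eq huT
      _ ≤ ∑ v ∈ S, w' v := hT.2 S hS.1
      _ = w' u + ∑ v ∈ S.erase u, w' v := (add_sum_erase S w' huS).symm
      _ = w' u + ∑ v ∈ S.erase u, w v := by rw [sum_eq (notMem_erase u S)]
  exact le_of_add_le_add_right h

theorem AmbiguousAt.apply_eq [PartialOrder M] [IsOrderedCancelAddMonoid M]
    (h : AmbiguousAt 𝓕 w u) (h' : AmbiguousAt 𝓕 w' u) (hw : ∀ v ≠ u, w v = w' v) :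
    w u = w' u := by
  obtain ⟨⟨S, hS, huS⟩, T, hT, huT⟩ := h
  obtain ⟨⟨S', hS', huS'⟩, T', hT', huT'⟩ := h'
  exact le_antisymm (hS.apply_le_of_mem_of_notMem hT' hw huS huT')
    (hS'.apply_le_of_mem_of_notMem hT (fun v hv => (hw v hv).symm) huS' huT)

theorem isolates_or_exists_ambiguousAt [LinearOrder M] (h𝓕 : 𝓕.Nonempty) (w : U → M) :
    Isolates w 𝓕 ∨ ∃ u, AmbiguousAt 𝓕 w u := by
  classical
  obtain ⟨S, hS⟩ : ∃ S, IsMinimizer 𝓕 w S := 𝓕.exists_min_image (fun S => ∑ u ∈ S, w u) h𝓕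
  by_cases hunique : ∀ T, IsMinimizer 𝓕 w T → T = S
  · exact Or.inl ⟨S, hS, hunique⟩
  push Not at hunique
  obtain ⟨T, hT, hTS⟩ := hunique
  obtain ⟨u, hu⟩ := symmDiff_nonempty.2 hTS
  rcases mem_symmDiff.1 hu with ⟨huT, huS⟩ | ⟨huS, huT⟩
  · exact Or.inr ⟨u, ⟨T, hT, huT⟩, S, hS, huS⟩
  · exact Or.inr ⟨u, ⟨S, hS, huS⟩, T, hT, huT⟩

end Minimizers

section Counting

variable {U : Type*} {α : U → Type*} [Fintype U] [DecidableEq U] [∀ u, Fintype (α u)]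

theorem card_mul_card_le_card_pi_of_apply_eq {B : Finset (∀ u, α u)} {u : U}
    (hB : ∀ w ∈ B, ∀ w' ∈ B, (∀ v ≠ u, w v = w' v) → w u = w' u) :
    #B * Fintype.card (α u) ≤ Fintype.card (∀ u, α u) := by
  rw [← card_univ, ← card_univ, ← card_product]
  refine card_le_card_of_injOn (fun p => update p.1 u p.2) (fun _ _ => mem_coe.2 (mem_univ _)) ?_
  rintro ⟨w, a⟩ hw ⟨w', a'⟩ hw' heq
  have hoff : ∀ v ≠ u, w v = w' v := fun v hv => by simpa [hv] using congrFun heq v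
  have hat : w u = w' u := hB w (mem_product.1 hw).1 w' (mem_product.1 hw').1 hoff
  have hww' : w = w' := funext fun v => (eq_or_ne v u).elim (fun hv => hv ▸ hat) (hoff v)
  have haa' : a = a' := by simpa using congrFun heq u
  rw [hww', haa']

theorem dens_le_inv_card_of_apply_eq {B : Finset (∀ u, α u)} {u : U} [Nonempty (α u)]
    (hB : ∀ w ∈ B, ∀ w' ∈ B, (∀ v ≠ u, w v = w' v) → w u = w' u) :
    B.dens ≤ (Fintype.card (α u) : ℚ≥0)⁻¹ := by
  have hcard : (0 : ℚ≥0) < Fintype.card (α u) := by exact_mod_cast Fintype.card_pos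
  rw [← one_div, le_div_iff₀ hcard, dens_eq_card_div_card, div_mul_eq_mul_div]
  exact div_le_one_of_le₀ (by exact_mod_cast card_mul_card_le_card_pi_of_apply_eq hB)
    (by positivity)

end Counting

section Isolation

variable {U M : Type*} {α : U → Type*} [Fintype U] [∀ u, Fintype (α u)] [AddCommMonoid M]

open Classical in
theorem dens_ambiguousAt_le [PartialOrder M] [IsOrderedCancelAddMonoid M]
    (𝓕 : Finset (Finset U)) {φ : ∀ u, α u → M} {u : U} [Nonempty (α u)] (hφ : Injective (φ u)) :
    dens {w : ∀ u, α u | AmbiguousAt 𝓕 (fun v => φ v (w v)) u} ≤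
      (Fintype.card (α u) : ℚ≥0)⁻¹ :=
  dens_le_inv_card_of_apply_eq fun _ hw _ hw' hoff => hφ <|
    (mem_filter.1 hw).2.apply_eq (mem_filter.1 hw').2 fun v hv => congrArg (φ v) (hoff v hv)

variable [∀ u, Nonempty (α u)] [LinearOrder M] [IsOrderedCancelAddMonoid M]
  {𝓕 : Finset (Finset U)} {φ : ∀ u, α u → M}

open Classical in
theorem one_le_dens_isolates_add_sum (h𝓕 : 𝓕.Nonempty) (hφ : ∀ u, Injective (φ u)) :
    1 ≤ dens {w : ∀ u, α u | Isolates (fun u => φ u (w u)) 𝓕} +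
      ∑ u, (Fintype.card (α u) : ℚ≥0)⁻¹ := by
  set good : Finset (∀ u, α u) := {w | Isolates (fun u => φ u (w u)) 𝓕}
  let bad (u : U) : Finset (∀ u, α u) := {w | AmbiguousAt 𝓕 (fun v => φ v (w v)) u}
  have hcover : good ∪ univ.biUnion bad = univ := eq_univ_of_forall fun w => by
    simpa [good, bad] using isolates_or_exists_ambiguousAt h𝓕 fun u => φ u (w u)
  calc (1 : ℚ≥0)
      = (good ∪ univ.biUnion bad).dens := by rw [hcover, dens_univ]
    _ ≤ good.dens + (univ.biUnion bad).dens := dens_union_le _ _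
    _ ≤ good.dens + ∑ u, (bad u).dens := by gcongr; exact dens_biUnion_le
    _ ≤ good.dens + ∑ u, (Fintype.card (α u) : ℚ≥0)⁻¹ := by
        gcongr with u
        exact dens_ambiguousAt_le 𝓕 (hφ u)

/-- The weight of `u` is `φ u a`, where `a` is uniform in `α u`; injectivity of `φ u` makes it
uniform on a set of `|α u|` weights. -/
theorem stmt8_general (h𝓕 : 𝓕.Nonempty) (hφ : ∀ u, Injective (φ u)) :
    1 - ∑ u, (Fintype.card (α u) : ℝ)⁻¹ ≤
      (Set.ncard {w : ∀ u, α u |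
        ∃! S : Finset U, S ∈ 𝓕 ∧ ∀ T ∈ 𝓕, ∑ u ∈ S, φ u (w u) ≤ ∑ u ∈ T, φ u (w u)} : ℝ) /
      ∏ u, (Fintype.card (α u) : ℝ) := by
  classical
  change _ ≤ (Set.ncard {w : ∀ u, α u | Isolates (fun u => φ u (w u)) 𝓕} : ℝ) / _
  have hdens := NNRat.cast_le (K := ℝ).2 (one_le_dens_isolates_add_sum h𝓕 hφ)
  push_cast [Fintype.card_pi] at hdens
  rw [← coe_filter_univ, Set.ncard_coe_finset]
  exact sub_le_iff_le_add.2 hdens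

end Isolation

/-- Isolation Lemma: for a nonempty family `𝓕` of subsets of a finite universe `U`,
if each weight `w(u) ∈ {1,…,N}` is chosen uniformly and independently at random
(modelled by the uniform counting over all functions `U → Fin N`, with weight
`(w u) + 1 ∈ {1,…,N}`), the probability that a unique member of `𝓕` attains the
minimum weight is at least `1 − |U|/N`. -/
theorem stmt8 {U : Type*} [Fintype U] [DecidableEq U] (N : ℕ) (hN : 0 < N)
    (𝓕 : Finset (Finset U)) (h𝓕 : 𝓕.Nonempty) :
    (1 - (Fintype.card U : ℝ) / N) ≤
      (Set.ncard {w : U → Fin N |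
        ∃! S : Finset U, S ∈ 𝓕 ∧ ∀ T ∈ 𝓕,
          ∑ u ∈ S, ((w u : ℕ) + 1) ≤ ∑ u ∈ T, ((w u : ℕ) + 1)} : ℝ) /
      (N ^ Fintype.card U) := by
  have : NeZero N := ⟨hN.ne'⟩
  simpa [div_eq_mul_inv] using
    stmt8_general (φ := fun (_ : U) (i : Fin N) => (i : ℕ) + 1) h𝓕
      fun _ => (add_left_injective 1).comp Fin.val_injective
end
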